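/- Let I be a finite set, theta : I -> R, and x1, x2 in I with x1 != x2 such that theta(x1) > theta(x2) and theta(x2) >= theta(x) for all x != x1 (x2 attains the maximum of theta over I \ {x1}). Let beta_2 > 0, beta_W > 0, sigmatilde > 0, and let W be a real number with theta(x2) < W <= (beta_2/beta_W) * (theta(x1) - theta(x2)) + theta(x1). Define theta' : I -> R by theta'(x) = theta(x) for x != x2 and theta'(x2) = (beta_2 * theta(x2) + beta_W * W) / (beta_2 + beta_W). Then sigmatilde * f(-|theta(x1) - max_{x != x1} theta(x)| / sigmatilde) < sigmatilde * f(-|theta'(x1) - max_{x != x1} theta'(x)| / sigmatilde), where f(zeta) = zeta * Phi(zeta) + phi(zeta) with Phi the standard normal cumulative distribution function and phi the standard normal density. -/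

import Mathlib

/-- The standard normal density `φ(ζ) = exp(-ζ²/2)/√(2π)`. -/
noncomputable def stdGaussPDF (ζ : ℝ) : ℝ :=
  (1 / Real.sqrt (2 * Real.pi)) * Real.exp (-ζ ^ 2 / 2)

/-- The standard normal cumulative distribution function `Φ(ζ) = ∫_{-∞}^ζ φ`. -/
noncomputable def stdGaussCDF (ζ : ℝ) : ℝ := ∫ t in Set.Iic ζ, stdGaussPDF t

/-- `f(ζ) = ζ·Φ(ζ) + φ(ζ)`, the function appearing in the closed form of the
knowledge-gradient value. -/
noncomputable def fKG (ζ : ℝ) : ℝ := ζ * stdGaussCDF ζ + stdGaussPDF ζ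

theorem kgaux_continuous : Continuous stdGaussPDF := by
  unfold stdGaussPDF; fun_prop

theorem kgaux_pos (x : ℝ) : 0 < stdGaussPDF x := by
  unfold stdGaussPDF
  have := Real.pi_pos
  positivity

theorem kgaux_integrable : MeasureTheory.Integrable stdGaussPDF := by
  have h := (integrable_exp_neg_mul_sq (b := 1 / 2) (by norm_num)).const_mul
    (1 / Real.sqrt (2 * Real.pi))
  refine h.congr (Filter.Eventually.of_forall fun x => ?_)
  simp only [stdGaussPDF]
  congr 2
  ring

theorem kgaux_cdf_pos (x : ℝ) : 0 < stdGaussCDF x := by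
  unfold stdGaussCDF
  rw [MeasureTheory.setIntegral_pos_iff_support_of_nonneg_ae
    (Filter.Eventually.of_forall fun t => (kgaux_pos t).le) kgaux_integrable.integrableOn]
  have : Function.support stdGaussPDF = Set.univ := by
    ext t; simp [(kgaux_pos t).ne']
  rw [this]
  simp

theorem kgaux_cdf_deriv (x : ℝ) : HasDerivAt stdGaussCDF (stdGaussPDF x) x := by
  have e : stdGaussCDF = fun y => stdGaussCDF 0 + ∫ t in (0 : ℝ)..y, stdGaussPDF t := by
    funext y
    have := intervalIntegral.integral_Iic_sub_Iic (μ := MeasureTheory.volume)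
      (f := stdGaussPDF) (a := 0) (b := y)
      kgaux_integrable.integrableOn kgaux_integrable.integrableOn
    simp only [stdGaussCDF]
    linarith
  rw [e]
  exact (intervalIntegral.integral_hasDerivAt_right
    (kgaux_continuous.intervalIntegrable _ _)
    (kgaux_continuous.stronglyMeasurableAtFilter _ _)
    kgaux_continuous.continuousAt).const_add _

theorem kgaux_pdf_deriv (x : ℝ) : HasDerivAt stdGaussPDF (-x * stdGaussPDF x) x := by
  have h1 : HasDerivAt (fun y : ℝ => -y ^ 2 / 2) (-x) x := by
    have := ((hasDerivAt_pow 2 x).neg).div_const 2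
    refine HasDerivAt.congr_deriv this ?_
    simp
    ring
  have h2 := h1.exp.const_mul (1 / Real.sqrt (2 * Real.pi))
  refine HasDerivAt.congr_deriv (f := stdGaussPDF) h2 ?_
  simp only [stdGaussPDF]
  ring

theorem kgaux_strictMono : StrictMono fKG := by
  refine strictMono_of_hasDerivAt_pos (f' := stdGaussCDF) (fun x => ?_) kgaux_cdf_pos
  have h := ((hasDerivAt_id x).mul (kgaux_cdf_deriv x)).add (kgaux_pdf_deriv x)
  refine HasDerivAt.congr_deriv (f := fKG) h ?_
  simp

/-- Failure of adaptive submodularity: if `x₂` attains the maximum of `θ` over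
`I \ {x₁}`, `θ(x₁) > θ(x₂)`, and the observation `W` of alternative `x₂`
satisfies `θ(x₂) < W ≤ (β₂/β_W)(θ(x₁) - θ(x₂)) + θ(x₁)`, then after the
Bayesian update `θ'(x₂) = (β₂θ(x₂) + β_W·W)/(β₂ + β_W)` the knowledge-gradient
value `σ̃·f(-|θ(x₁) - max_{x ≠ x₁} θ(x)|/σ̃)` of alternative `x₁` strictly
increases. -/
theorem kg_value_strictly_increases {I : Type*} [Fintype I] [DecidableEq I]
    (θ : I → ℝ) (x1 x2 : I) (hne : x1 ≠ x2)
    (h12 : θ x2 < θ x1) (hmax : ∀ x, x ≠ x1 → θ x ≤ θ x2)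
    (β2 βW st W : ℝ) (hβ2 : 0 < β2) (hβW : 0 < βW) (hst : 0 < st)
    (hW1 : θ x2 < W) (hW2 : W ≤ β2 / βW * (θ x1 - θ x2) + θ x1) :
    st * fKG (-|θ x1 -
        (Finset.univ.erase x1).sup'
          ⟨x2, Finset.mem_erase.mpr ⟨Ne.symm hne, Finset.mem_univ x2⟩⟩ θ| / st) <
    st * fKG (-|Function.update θ x2 ((β2 * θ x2 + βW * W) / (β2 + βW)) x1 -
        (Finset.univ.erase x1).sup'
          ⟨x2, Finset.mem_erase.mpr ⟨Ne.symm hne, Finset.mem_univ x2⟩⟩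
          (Function.update θ x2 ((β2 * θ x2 + βW * W) / (β2 + βW)))| / st) := by
  set m := (β2 * θ x2 + βW * W) / (β2 + βW) with hm
  have hs : 0 < β2 + βW := by positivity
  have hm1 : θ x2 < m := by
    rw [hm, lt_div_iff₀ hs]
    nlinarith
  have hm2 : m ≤ θ x1 := by
    rw [hm, div_le_iff₀ hs]
    have h := mul_le_mul_of_nonneg_left hW2 hβW.le
    have e : βW * (β2 / βW * (θ x1 - θ x2) + θ x1) = β2 * (θ x1 - θ x2) + βW * θ x1 := by
      field_simp
    rw [e] at h
    linarith
  have s1 : (Finset.univ.erase x1).sup'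
      ⟨x2, Finset.mem_erase.mpr ⟨Ne.symm hne, Finset.mem_univ x2⟩⟩ θ = θ x2 := by
    apply le_antisymm
    · exact Finset.sup'_le _ _ fun x hx => hmax x (Finset.ne_of_mem_erase hx)
    · exact Finset.le_sup' θ (Finset.mem_erase.mpr ⟨Ne.symm hne, Finset.mem_univ x2⟩)
  have s2 : (Finset.univ.erase x1).sup'
      ⟨x2, Finset.mem_erase.mpr ⟨Ne.symm hne, Finset.mem_univ x2⟩⟩
      (Function.update θ x2 m) = m := by
    apply le_antisymm
    · refine Finset.sup'_le _ _ fun x hx => ?_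
      by_cases hx2 : x = x2
      · subst hx2; simp
      · rw [Function.update_of_ne hx2]
        exact (hmax x (Finset.ne_of_mem_erase hx)).trans hm1.le
    · have := Finset.le_sup' (Function.update θ x2 m)
        (Finset.mem_erase.mpr ⟨Ne.symm hne, Finset.mem_univ x2⟩)
      simpa using this
  rw [s1, s2, Function.update_of_ne hne, abs_of_pos (by linarith), abs_of_nonneg (by linarith)]
  refine mul_lt_mul_of_pos_left (kgaux_strictMono ?_) hst
  exact div_lt_div_of_pos_right (by linarith) hst
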